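/- Church–Rosser property of the name algebra: two terms u and v have the same normal form if and only if u and v are related by the reflexive-symmetric-transitive closure of the one-step rewrite relation →. -/

import Mathlib

/-- Terms of the name algebra over atoms in ℕ. -/
inductive Term : Type
  | var : ℕ → Term
  | projL : Term → Term
  | projR : Term → Term
  | join : Term → Term → Term
deriving DecidableEq

/-- One-step rewrite relation: the three rules `(u ∧ v).l → u`, `(u ∧ v).r → v`,
`(u.l ∧ u.r) → u`, closed under all term contexts. -/
inductive Step : Term → Term → Prop
  | splitL (u v : Term) : Step (Term.projL (Term.join u v)) u
  | splitR (u v : Term) : Step (Term.projR (Term.join u v)) v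
  | merge (u : Term) : Step (Term.join (Term.projL u) (Term.projR u)) u
  | congL {a b : Term} : Step a b → Step (Term.projL a) (Term.projL b)
  | congR {a b : Term} : Step a b → Step (Term.projR a) (Term.projR b)
  | congJoinL {a b : Term} (v : Term) : Step a b → Step (Term.join a v) (Term.join b v)
  | congJoinR {a b : Term} (u : Term) : Step a b → Step (Term.join u a) (Term.join u b)

/-- Reflexive-transitive closure of `Step`. -/
def Steps : Term → Term → Prop := Relation.ReflTransGen Step

/-- A term is in normal form if no rewrite step applies to it. -/
def NormalForm (n : Term) : Prop := ¬ ∃ m, Step n m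

/-- `u ≈ v` : the normal forms of `u` and `v` coincide, i.e. they reach a common normal form. -/
def TermEquiv (u v : Term) : Prop := ∃ n, NormalForm n ∧ Steps u n ∧ Steps v n

/-!
Orient each rule as a simplifying operation on terms, and evaluate a term bottom-up with these
operations. Every term rewrites to its value, which is normal. On normal terms the operations
satisfy the three rules as equations, so evaluation is invariant under rewriting and convertible
terms have the same value; no analysis of critical pairs is needed.
-/

theorem normalForm_var (n : ℕ) : NormalForm (.var n) := by
  rintro ⟨_, ⟨⟩⟩

theorem normalForm_projL_iff {t : Term} :
    NormalForm (.projL t) ↔ NormalForm t ∧ ¬∃ u v, t = .join u v := by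
  constructor
  · intro h
    exact ⟨fun ⟨_, ht⟩ => h ⟨_, .congL ht⟩, fun ⟨u, v, e⟩ => h ⟨u, e ▸ .splitL u v⟩⟩
  · rintro ⟨ht, ne_join⟩ ⟨_, hstep⟩
    cases hstep with
    | splitL => exact ne_join ⟨_, _, rfl⟩
    | congL hstep => exact ht ⟨_, hstep⟩

theorem normalForm_projR_iff {t : Term} :
    NormalForm (.projR t) ↔ NormalForm t ∧ ¬∃ u v, t = .join u v := by
  constructor
  · intro h
    exact ⟨fun ⟨_, ht⟩ => h ⟨_, .congR ht⟩, fun ⟨u, v, e⟩ => h ⟨v, e ▸ .splitR u v⟩⟩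
  · rintro ⟨ht, ne_join⟩ ⟨_, hstep⟩
    cases hstep with
    | splitR => exact ne_join ⟨_, _, rfl⟩
    | congR hstep => exact ht ⟨_, hstep⟩

theorem normalForm_join_iff {u v : Term} :
    NormalForm (.join u v) ↔
      NormalForm u ∧ NormalForm v ∧ ¬∃ t, u = .projL t ∧ v = .projR t := by
  constructor
  · intro h
    refine ⟨fun ⟨_, hu⟩ => h ⟨_, .congJoinL v hu⟩, fun ⟨_, hv⟩ => h ⟨_, .congJoinR u hv⟩, ?_⟩
    rintro ⟨t, rfl, rfl⟩
    exact h ⟨t, .merge t⟩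
  · rintro ⟨hu, hv, ne_proj⟩ ⟨_, hstep⟩
    cases hstep with
    | merge => exact ne_proj ⟨_, rfl, rfl⟩
    | congJoinL _ hstep => exact hu ⟨_, hstep⟩
    | congJoinR _ hstep => exact hv ⟨_, hstep⟩

namespace Steps

variable {t t' u u' v v' : Term}

theorem projL (h : Steps t t') : Steps (.projL t) (.projL t') :=
  Relation.ReflTransGen.lift Term.projL (fun _ _ => Step.congL) _ _ h

theorem projR (h : Steps t t') : Steps (.projR t) (.projR t') :=
  Relation.ReflTransGen.lift Term.projR (fun _ _ => Step.congR) _ _ h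

theorem join (hu : Steps u u') (hv : Steps v v') : Steps (.join u v) (.join u' v') :=
  (Relation.ReflTransGen.lift (Term.join · v) (fun _ _ => Step.congJoinL v) _ _ hu).trans
    (Relation.ReflTransGen.lift (Term.join u') (fun _ _ => Step.congJoinR u') _ _ hv)

end Steps

namespace Term

/-- The left projection of a term, with the rule `(u ∧ v).l → u` applied at the root if
possible. -/
def reduceProjL : Term → Term
  | join u _ => u
  | t => projL t

/-- The right projection of a term, with the rule `(u ∧ v).r → v` applied at the root if
possible. -/
def reduceProjR : Term → Term
  | join _ v => v
  | t => projR t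

/-- The join of two terms, with the rule `(u.l ∧ u.r) → u` applied at the root if possible. -/
def reduceJoin : Term → Term → Term
  | projL u, projR v => if u = v then u else join (projL u) (projR v)
  | u, v => join u v

/-- The normal form of a term, computed by bottom-up evaluation. -/
def normalize : Term → Term
  | var n => var n
  | projL t => reduceProjL (normalize t)
  | projR t => reduceProjR (normalize t)
  | join u v => reduceJoin (normalize u) (normalize v)

variable {t u v : Term}

theorem reduceProjL_of_ne_join (h : ¬∃ u v, t = join u v) : reduceProjL t = projL t := by
  cases t <;> first | rfl | exact absurd ⟨_, _, rfl⟩ h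

theorem reduceProjR_of_ne_join (h : ¬∃ u v, t = join u v) : reduceProjR t = projR t := by
  cases t <;> first | rfl | exact absurd ⟨_, _, rfl⟩ h

theorem reduceJoin_projL_projR (t : Term) : reduceJoin (projL t) (projR t) = t :=
  if_pos rfl

theorem reduceJoin_of_ne_proj (h : ¬∃ t, u = projL t ∧ v = projR t) :
    reduceJoin u v = join u v := by
  fun_cases reduceJoin u v with
  | case1 t => exact absurd ⟨t, rfl, rfl⟩ h
  | case2 => rfl
  | case3 => rfl

theorem steps_reduceProjL (t : Term) : Steps (projL t) (reduceProjL t) := by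
  obtain ⟨u, v, rfl⟩ | h := em (∃ u v, t = join u v)
  · exact .single (.splitL u v)
  · exact reduceProjL_of_ne_join h ▸ .refl

theorem steps_reduceProjR (t : Term) : Steps (projR t) (reduceProjR t) := by
  obtain ⟨u, v, rfl⟩ | h := em (∃ u v, t = join u v)
  · exact .single (.splitR u v)
  · exact reduceProjR_of_ne_join h ▸ .refl

theorem steps_reduceJoin (u v : Term) : Steps (join u v) (reduceJoin u v) := by
  obtain ⟨t, rfl, rfl⟩ | h := em (∃ t, u = projL t ∧ v = projR t)
  · exact (reduceJoin_projL_projR t).symm ▸ .single (.merge t)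
  · exact reduceJoin_of_ne_proj h ▸ .refl

theorem steps_normalize (t : Term) : Steps t (normalize t) := by
  induction t with
  | var n => exact .refl
  | projL t ih => exact ih.projL.trans (steps_reduceProjL _)
  | projR t ih => exact ih.projR.trans (steps_reduceProjR _)
  | join u v ihu ihv => exact (ihu.join ihv).trans (steps_reduceJoin _ _)

theorem normalForm_reduceProjL (ht : NormalForm t) : NormalForm (reduceProjL t) := by
  obtain ⟨u, v, rfl⟩ | h := em (∃ u v, t = join u v)
  · exact (normalForm_join_iff.mp ht).1
  · exact reduceProjL_of_ne_join h ▸ normalForm_projL_iff.mpr ⟨ht, h⟩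

theorem normalForm_reduceProjR (ht : NormalForm t) : NormalForm (reduceProjR t) := by
  obtain ⟨u, v, rfl⟩ | h := em (∃ u v, t = join u v)
  · exact (normalForm_join_iff.mp ht).2.1
  · exact reduceProjR_of_ne_join h ▸ normalForm_projR_iff.mpr ⟨ht, h⟩

theorem normalForm_reduceJoin (hu : NormalForm u) (hv : NormalForm v) :
    NormalForm (reduceJoin u v) := by
  obtain ⟨t, rfl, rfl⟩ | h := em (∃ t, u = projL t ∧ v = projR t)
  · exact (reduceJoin_projL_projR t).symm ▸ (normalForm_projL_iff.mp hu).1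
  · exact reduceJoin_of_ne_proj h ▸ normalForm_join_iff.mpr ⟨hu, hv, h⟩

theorem normalForm_normalize (t : Term) : NormalForm (normalize t) := by
  induction t with
  | var n => exact normalForm_var n
  | projL t ih => exact normalForm_reduceProjL ih
  | projR t ih => exact normalForm_reduceProjR ih
  | join u v ihu ihv => exact normalForm_reduceJoin ihu ihv

theorem reduceProjL_reduceJoin (hu : NormalForm u) (v : Term) :
    reduceProjL (reduceJoin u v) = u := by
  obtain ⟨t, rfl, rfl⟩ | h := em (∃ t, u = projL t ∧ v = projR t)
  · rw [reduceJoin_projL_projR, reduceProjL_of_ne_join (normalForm_projL_iff.mp hu).2]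
  · rw [reduceJoin_of_ne_proj h, reduceProjL]

theorem reduceProjR_reduceJoin (u : Term) (hv : NormalForm v) :
    reduceProjR (reduceJoin u v) = v := by
  obtain ⟨t, rfl, rfl⟩ | h := em (∃ t, u = projL t ∧ v = projR t)
  · rw [reduceJoin_projL_projR, reduceProjR_of_ne_join (normalForm_projR_iff.mp hv).2]
  · rw [reduceJoin_of_ne_proj h, reduceProjR]

theorem reduceJoin_reduceProjL_reduceProjR (ht : NormalForm t) :
    reduceJoin (reduceProjL t) (reduceProjR t) = t := by
  obtain ⟨u, v, rfl⟩ | h := em (∃ u v, t = join u v)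
  · exact reduceJoin_of_ne_proj (normalForm_join_iff.mp ht).2.2
  · rw [reduceProjL_of_ne_join h, reduceProjR_of_ne_join h, reduceJoin_projL_projR]

theorem normalize_eq_of_step (h : Step u v) : normalize u = normalize v := by
  induction h with
  | splitL u v => exact reduceProjL_reduceJoin (normalForm_normalize u) _
  | splitR u v => exact reduceProjR_reduceJoin _ (normalForm_normalize v)
  | merge t => exact reduceJoin_reduceProjL_reduceProjR (normalForm_normalize t)
  | congL _ ih => exact congrArg reduceProjL ih
  | congR _ ih => exact congrArg reduceProjR ih
  | congJoinL v _ ih => exact congrArg (reduceJoin · (normalize v)) ih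
  | congJoinR u _ ih => exact congrArg (reduceJoin (normalize u)) ih

theorem normalize_eq_of_eqvGen (h : Relation.EqvGen Step u v) : normalize u = normalize v :=
  congrArg (Quot.lift normalize fun _ _ => normalize_eq_of_step) (Quot.eqvGen_sound h)

end Term

/-- Church–Rosser: two terms have the same normal form if and only if they are
related by the reflexive-symmetric-transitive closure of the rewrite relation. -/
theorem church_rosser :
    ∀ u v : Term, TermEquiv u v ↔ Relation.EqvGen Step u v := by
  intro u v
  constructor
  · rintro ⟨n, -, hu, hv⟩
    exact Relation.join_le_of_equivalence_of_le (Relation.EqvGen.is_equivalence Step)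
      (Relation.EqvGen.reflTransGen_le_eqvGen Step) u v ⟨n, hu, hv⟩
  · intro h
    have same_normalize : u.normalize = v.normalize := Term.normalize_eq_of_eqvGen h
    exact ⟨u.normalize, u.normalForm_normalize, u.steps_normalize,
      same_normalize ▸ v.steps_normalize⟩
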